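/- Let A be a symmetric real k×k matrix, T a symmetric positive definite real m×m matrix, and S a real k×m matrix. If A − 64 S T⁻¹ Sᵀ is positive semidefinite, then the symmetric (2k+2m)×(2k+2m) block matrix G with block rows [ (1/8)A, −(1/8)A, S, −S ], [ −(1/8)A, (1/8)A, −S, S ], [ Sᵀ, −Sᵀ, (1/8)T, −(1/8)T ], [ −Sᵀ, Sᵀ, −(1/8)T, (1/8)T ] is positive semidefinite. -/

import Mathlib

open Matrix

/-!
Let `J = [1, -1]` be the jump across the facet. Each `2 × 2` group of blocks of `G` has the form
`Jᴴ B J`, so `G` is the congruence by `diag(J, J)` of the small block matrix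
`[[A/8, S], [Sᵀ, T/8]]`, which is in turn a principal submatrix of `G`: the two are positive
semidefinite together. The Schur complement of `T/8` in the small matrix is
`A/8 - 8 S T⁻¹ Sᵀ = (A - 64 S T⁻¹ Sᵀ)/8`.
-/

section Jump

/-- The jump operator `(u⁻, u⁺) ↦ u⁻ - u⁺` across a facet, for traces indexed by `n`; the two
summands of `n ⊕ n` index the two sides of the facet. -/
def jumpMatrix (n R : Type*) [DecidableEq n] [Ring R] : Matrix n (n ⊕ n) R :=
  fromCols 1 (-1)

variable {m n R : Type*} [Ring R] [StarRing R]

theorem conjTranspose_jumpMatrix_mul_mul_jumpMatrix [Fintype m] [DecidableEq m] [Fintype n]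
    [DecidableEq n] (B : Matrix m n R) :
    (jumpMatrix m R)ᴴ * B * jumpMatrix n R = fromBlocks B (-B) (-B) B := by
  simp [jumpMatrix, conjTranspose_fromCols_eq_fromRows_conjTranspose, fromRows_mul, mul_fromCols]

theorem posSemidef_fromBlocks_jump_iff [PartialOrder R] [Finite m] [Finite n]
    {A : Matrix m m R} {B : Matrix m n R} {C : Matrix n m R} {D : Matrix n n R} :
    (fromBlocks (fromBlocks A (-A) (-A) A) (fromBlocks B (-B) (-B) B)
      (fromBlocks C (-C) (-C) C) (fromBlocks D (-D) (-D) D)).PosSemidef ↔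
      (fromBlocks A B C D).PosSemidef := by
  classical
  have := Fintype.ofFinite m
  have := Fintype.ofFinite n
  constructor
  · intro h
    have h_sub := h.submatrix (Sum.map Sum.inl Sum.inl : m ⊕ n → (m ⊕ m) ⊕ (n ⊕ n))
    convert h_sub using 1
    ext (i | i) (j | j) <;> rfl
  · intro h
    have h_congr := h.conjTranspose_mul_mul_same
      (fromBlocks (jumpMatrix m R) 0 0 (jumpMatrix n R))
    simpa only [fromBlocks_conjTranspose, conjTranspose_zero, fromBlocks_multiply, Matrix.zero_mul,
      Matrix.mul_zero, add_zero, zero_add, conjTranspose_jumpMatrix_mul_mul_jumpMatrix]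
      using h_congr

end Jump

section SchurComplement

variable {m n 𝕜 : Type*} [Field 𝕜] [PartialOrder 𝕜] [StarRing 𝕜] [StarOrderedRing 𝕜]

theorem posSemidef_smul_iff_of_pos {c : 𝕜} (hc : 0 < c) {M : Matrix n n 𝕜} :
    (c • M).PosSemidef ↔ M.PosSemidef := by
  refine ⟨fun h ↦ ?_, fun h ↦ h.smul hc.le⟩
  have hc_inv : 0 ≤ c⁻¹ := by
    have hc_star : star c⁻¹ = c⁻¹ := (IsSelfAdjoint.of_nonneg hc.le).inv₀
    simpa only [hc_star, inv_mul_cancel₀ hc.ne', one_mul] using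
      star_left_conjugate_nonneg hc.le c⁻¹
  simpa only [inv_smul_smul₀ hc.ne'] using h.smul hc_inv

theorem posSemidef_fromBlocks_smul_iff [Finite m] [Fintype n] [DecidableEq n] {a b : 𝕜}
    (ha : 0 < a) (hb : 0 < b) (A : Matrix m m 𝕜) (S : Matrix m n 𝕜) {T : Matrix n n 𝕜}
    (hT : T.PosDef) :
    (fromBlocks (a • A) S Sᴴ (b • T)).PosSemidef ↔
      (A - (a * b)⁻¹ • (S * T⁻¹ * Sᴴ)).PosSemidef := by
  have hbT : (b • T).PosDef := hT.smul hb
  have : Invertible (b • T) := hbT.isUnit.invertible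
  have h_inv : (b • T)⁻¹ = b⁻¹ • T⁻¹ :=
    inv_smul' T (Units.mk0 b hb.ne') ((isUnit_iff_isUnit_det T).mp hT.isUnit)
  have h_schur : a • A - S * (b • T)⁻¹ * Sᴴ = a • (A - (a * b)⁻¹ • (S * T⁻¹ * Sᴴ)) := by
    rw [h_inv, smul_sub, smul_smul, mul_inv, mul_inv_cancel_left₀ ha.ne', Matrix.mul_smul,
      Matrix.smul_mul]
  rw [hbT.fromBlocks₂₂, h_schur, posSemidef_smul_iff_of_pos ha]

theorem extended_sat_facet_block_posSemidef_general [Finite m] [Fintype n] [DecidableEq n]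
    {a b : 𝕜} (ha : 0 < a) (hb : 0 < b) (A : Matrix m m 𝕜) (S : Matrix m n 𝕜)
    {T : Matrix n n 𝕜} (hT : T.PosDef) :
    (fromBlocks
      (fromBlocks (a • A) (-(a • A)) (-(a • A)) (a • A))
      (fromBlocks S (-S) (-S) S)
      (fromBlocks Sᴴ (-Sᴴ) (-Sᴴ) Sᴴ)
      (fromBlocks (b • T) (-(b • T)) (-(b • T)) (b • T))).PosSemidef ↔
      (A - (a * b)⁻¹ • (S * T⁻¹ * Sᴴ)).PosSemidef :=
  posSemidef_fromBlocks_jump_iff.trans (posSemidef_fromBlocks_smul_iff ha hb A S hT)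

end SchurComplement

/-- Generic facet block of the energy-stability analysis of extended-stencil
SATs: if `A − 64 S T⁻¹ Sᵀ ⪰ 0` (with `A` symmetric and `T` SPD), then the 4×4
block matrix `G` built from `A/8`, `S`, and `T/8` is positive semidefinite. -/
theorem extended_sat_facet_block_posSemidef {k m : ℕ}
    (A : Matrix (Fin k) (Fin k) ℝ) (T : Matrix (Fin m) (Fin m) ℝ)
    (S : Matrix (Fin k) (Fin m) ℝ)
    (hA : A = Aᵀ) (hT : T.PosDef)
    (h : (A - (64 : ℝ) • (S * T⁻¹ * Sᵀ)).PosSemidef) :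
    (Matrix.fromBlocks
      (Matrix.fromBlocks ((1/8 : ℝ) • A) (-((1/8 : ℝ) • A))
        (-((1/8 : ℝ) • A)) ((1/8 : ℝ) • A))
      (Matrix.fromBlocks S (-S) (-S) S)
      (Matrix.fromBlocks Sᵀ (-Sᵀ) (-Sᵀ) Sᵀ)
      (Matrix.fromBlocks ((1/8 : ℝ) • T) (-((1/8 : ℝ) • T))
        (-((1/8 : ℝ) • T)) ((1/8 : ℝ) • T))).PosSemidef := by
  have h_const : ((1/8 : ℝ) * (1/8))⁻¹ = 64 := by norm_num
  rw [← h_const] at h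
  exact (extended_sat_facet_block_posSemidef_general (by norm_num) (by norm_num) A S hT).mpr h
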